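/- As δ → 0+, T((1-δ)/e) = 1 - √(2δ) + O(δ), i.e., there exist constants C, δ₀ > 0 such that |T((1-δ)/e) - 1 + √(2δ)| ≤ C·δ for all 0 < δ < δ₀. -/

import Mathlib

/-!
The inverse of `T` on `[0, 1/e)` is `x ↦ x e^{-x}`. For small `x`, expand every `e^{-(k+1)x}` in
`T(x e^{-x})` and collect powers of `x`: for `n ≥ 1` the coefficient of `x^{n+1}` is a multiple of
the `(n+1)`-st finite difference of `k ↦ k^n` at `0`, so only the term `x` survives. The identity
`T(x e^{-x}) = x` extends to `0 ≤ x < 1` by analyticity. Setting `x = 1 - y`, the equation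
`x e^{-x} = (1 - δ)/e` becomes `(1 - y) e^y = 1 - δ`, whose left side is `1 - y²/2 + O(y³)`;
hence `y = √(2δ) + O(δ)`.
-/

open Real

/-- The tree function `T(z) = Σ_{k≥1} k^{k-1} z^k / k!`. -/
noncomputable def treeFun (z : ℝ) : ℝ :=
  ∑' k : ℕ, ((k + 1 : ℕ) : ℝ) ^ k * z ^ (k + 1) / ((k + 1).factorial : ℝ)

theorem sum_neg_one_pow_mul_choose_mul_pow_eq_zero {R : Type*} [CommRing R] {j n : ℕ}
    (h : j < n) :
    ∑ k ∈ Finset.range (n + 1), (-1 : R) ^ (n - k) * (n.choose k : R) * (k : R) ^ j = 0 := by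
  simpa [fwdDiff_iter_eq_sum_shift] using congrFun (fwdDiff_iter_pow_eq_zero_of_lt (R := R) h) 0

theorem hasSum_sum_antidiagonal {A α : Type*} [AddCommMonoid A] [Finset.HasAntidiagonal A]
    [AddCommMonoid α] [TopologicalSpace α] [ContinuousAdd α] [RegularSpace α]
    {f : A × A → α} {a : α} (h : HasSum f a) :
    HasSum (fun n => ∑ p ∈ Finset.HasAntidiagonal.antidiagonal n, f p) a := by
  refine (Finset.HasAntidiagonal.sigmaAntidiagonalEquivProd.hasSum_iff.2 h).sigma fun n => ?_
  rw [← Finset.sum_coe_sort]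
  exact hasSum_fintype _

theorem mul_exp_neg_lt_exp_neg_one {x : ℝ} (hx : x ≠ 1) : x * exp (-x) < exp (-1) := by
  have h : x < exp (x - 1) := by simpa using add_one_lt_exp (sub_ne_zero.2 hx)
  calc x * exp (-x) < exp (x - 1) * exp (-x) := by gcongr
    _ = exp (-1) := by rw [← exp_add]; ring_nf

/-- The coefficients of `T(z) / z`. -/
noncomputable def treeCoeff (k : ℕ) : ℝ := ((k + 1 : ℕ) : ℝ) ^ k / ((k + 1).factorial : ℝ)

theorem treeCoeff_nonneg (k : ℕ) : 0 ≤ treeCoeff k := by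
  unfold treeCoeff; positivity

theorem treeCoeff_le_exp (k : ℕ) : treeCoeff k ≤ exp (k + 1 : ℕ) :=
  calc treeCoeff k ≤ ((k + 1 : ℕ) : ℝ) ^ k / (k.factorial : ℝ) := by
        unfold treeCoeff; gcongr; exact k.le_succ
    _ ≤ exp (k + 1 : ℕ) := pow_div_factorial_le_exp _ (by positivity) k

theorem le_radius_ofScalars_treeCoeff :
    ENNReal.ofReal (exp (-1)) ≤ (FormalMultilinearSeries.ofScalars ℝ treeCoeff).radius := by
  refine FormalMultilinearSeries.le_radius_of_bound _ (exp 1) fun n => ?_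
  rw [FormalMultilinearSeries.ofScalars_norm, norm_of_nonneg (treeCoeff_nonneg n),
    coe_toNNReal _ (exp_pos _).le]
  calc treeCoeff n * exp (-1) ^ n ≤ exp (n + 1 : ℕ) * exp (-1) ^ n := by
        gcongr; exact treeCoeff_le_exp n
    _ = exp 1 := by rw [← exp_nat_mul, ← exp_add]; push_cast; ring_nf

theorem mem_eball_radius_ofScalars_treeCoeff {z : ℝ} (hz : |z| < exp (-1)) :
    z ∈ Metric.eball 0 (FormalMultilinearSeries.ofScalars ℝ treeCoeff).radius := by
  refine Metric.eball_subset_eball le_radius_ofScalars_treeCoeff ?_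
  rwa [Metric.eball_ofReal, mem_ball_zero_iff]

theorem treeFun_eq_mul_ofScalarsSum :
    treeFun = fun z => z * FormalMultilinearSeries.ofScalarsSum treeCoeff z := by
  ext z
  rw [FormalMultilinearSeries.ofScalars_sum_eq, ← tsum_mul_left]
  refine tsum_congr fun k => ?_
  rw [treeCoeff, smul_eq_mul]
  ring

theorem hasSum_treeFun {z : ℝ} (hz : |z| < exp (-1)) :
    HasSum (fun k => treeCoeff k * z ^ (k + 1)) (treeFun z) := by
  have h := (FormalMultilinearSeries.hasSum _ (mem_eball_radius_ofScalars_treeCoeff hz)).mul_left z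
  simp only [treeFun_eq_mul_ofScalarsSum]
  refine h.congr_fun fun k => ?_
  rw [FormalMultilinearSeries.ofScalars_apply_eq, smul_eq_mul]
  ring

theorem analyticAt_treeFun {z : ℝ} (hz : |z| < exp (-1)) : AnalyticAt ℝ treeFun z := by
  have hmem := mem_eball_radius_ofScalars_treeCoeff hz
  rw [treeFun_eq_mul_ofScalarsSum]
  exact analyticAt_id.mul <| (FormalMultilinearSeries.hasFPowerSeriesOnBall _
    (Metric.pos_of_mem_eball hmem)).analyticAt_of_mem hmem

/-- The terms of the double series obtained from `T(x e^t) = Σ_k c_k x^{k+1} e^{(k+1)t}`, with `c_k`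
the coefficients `treeCoeff k`, by expanding each exponential in powers of `t`. -/
noncomputable def treeExpTerm (x t : ℝ) (p : ℕ × ℕ) : ℝ :=
  treeCoeff p.1 * x ^ (p.1 + 1) * ((((p.1 + 1 : ℕ) : ℝ) * t) ^ p.2 / (p.2.factorial : ℝ))

theorem norm_treeExpTerm (x t : ℝ) (p : ℕ × ℕ) :
    ‖treeExpTerm x t p‖ = treeExpTerm |x| |t| p := by
  simp only [treeExpTerm, norm_mul, norm_div, norm_pow, norm_eq_abs,
    Nat.abs_cast, abs_of_nonneg (treeCoeff_nonneg p.1)]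

theorem hasSum_treeExpTerm_row (x t : ℝ) (k : ℕ) :
    HasSum (fun m => treeExpTerm x t (k, m)) (treeCoeff k * (x * exp t) ^ (k + 1)) := by
  have h := NormedSpace.expSeries_div_hasSum_exp (((k + 1 : ℕ) : ℝ) * t)
  rw [← exp_eq_exp_ℝ, exp_nat_mul] at h
  rw [mul_pow, ← mul_assoc]
  exact h.mul_left _

theorem summable_treeExpTerm {x t : ℝ} (h : |x| * exp |t| < exp (-1)) :
    Summable (treeExpTerm x t) := by
  refine .of_norm ((summable_prod_of_nonneg fun _ => norm_nonneg _).2 ?_)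
  simp only [norm_treeExpTerm, (hasSum_treeExpTerm_row _ _ _).tsum_eq]
  refine ⟨fun k => (hasSum_treeExpTerm_row _ _ k).summable, (hasSum_treeFun ?_).summable⟩
  rwa [abs_of_nonneg (by positivity)]

theorem hasSum_treeExpTerm {x t : ℝ} (h : |x| * exp |t| < exp (-1)) :
    HasSum (treeExpTerm x t) (treeFun (x * exp t)) := by
  have hxt : |x * exp t| < exp (-1) := by
    rw [abs_mul, abs_exp]
    refine lt_of_le_of_lt ?_ h
    gcongr
    exact le_abs_self t
  have hs := summable_treeExpTerm h
  rw [← (hs.hasSum.prod_fiberwise (hasSum_treeExpTerm_row x t)).unique (hasSum_treeFun hxt)]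
  exact hs.hasSum

theorem treeExpTerm_neg_self (x : ℝ) (k m : ℕ) :
    treeExpTerm x (-x) (k, m) = x ^ (k + m + 1) / ((k + m + 1).factorial : ℝ) *
      ((-1) ^ m * ((k + m + 1).choose (k + 1) : ℝ) * ((k + 1 : ℕ) : ℝ) ^ (k + m)) := by
  rw [add_right_comm k m 1, Nat.cast_add_choose, treeExpTerm, treeCoeff]
  field_simp
  ring

theorem sum_antidiagonal_treeExpTerm_neg_self (x : ℝ) (n : ℕ) :
    ∑ p ∈ Finset.HasAntidiagonal.antidiagonal n, treeExpTerm x (-x) p = if n = 0 then x else 0 := by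
  split_ifs with hn
  · simp [hn, treeExpTerm, treeCoeff]
  have hdiff := sum_neg_one_pow_mul_choose_mul_pow_eq_zero (R := ℝ) n.lt_succ_self
  rw [Finset.sum_range_succ', Nat.cast_zero, zero_pow hn, mul_zero, add_zero] at hdiff
  rw [Finset.Nat.sum_antidiagonal_eq_sum_range_succ_mk]
  calc ∑ k ∈ Finset.range (n + 1), treeExpTerm x (-x) (k, n - k)
      = ∑ k ∈ Finset.range (n + 1), x ^ (n + 1) / ((n + 1).factorial : ℝ) *
          ((-1) ^ (n - k) * ((n + 1).choose (k + 1) : ℝ) * ((k + 1 : ℕ) : ℝ) ^ n) := by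
        refine Finset.sum_congr rfl fun k hk => ?_
        rw [treeExpTerm_neg_self, Nat.add_sub_cancel' (Finset.mem_range_succ_iff.1 hk)]
    _ = 0 := by
        rw [← Finset.mul_sum]
        simp only [Nat.succ_eq_add_one, Nat.add_sub_add_right] at hdiff
        rw [hdiff, mul_zero]

theorem treeFun_mul_exp_neg_of_abs_mul_exp_abs_lt {x : ℝ} (h : |x| * exp |x| < exp (-1)) :
    treeFun (x * exp (-x)) = x := by
  have hdouble : HasSum (treeExpTerm x (-x)) (treeFun (x * exp (-x))) :=
    hasSum_treeExpTerm (by rwa [abs_neg])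
  have hdiag := hasSum_sum_antidiagonal hdouble
  simp only [sum_antidiagonal_treeExpTerm_neg_self] at hdiag
  exact hdiag.unique (hasSum_ite_eq 0 x)

theorem treeFun_mul_exp_neg {x : ℝ} (hx0 : 0 ≤ x) (hx1 : x < 1) :
    treeFun (x * exp (-x)) = x := by
  have hanalytic : AnalyticOnNhd ℝ (fun y => treeFun (y * exp (-y))) (Set.Ico 0 1) := by
    intro y ⟨hy0, hy1⟩
    have hlt : |y * exp (-y)| < exp (-1) := by
      rw [abs_of_nonneg (by positivity)]
      exact mul_exp_neg_lt_exp_neg_one hy1.ne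
    exact (analyticAt_treeFun hlt).fun_comp (f := fun y => y * exp (-y)) (by fun_prop)
  have hnear : ∀ᶠ y in nhds (0 : ℝ), treeFun (y * exp (-y)) = y := by
    have hcont : Continuous fun y : ℝ => |y| * exp |y| := by fun_prop
    have hlt := hcont.continuousAt.eventually_lt (x₀ := 0)
      (continuousAt_const (y := exp (-1))) (by simp [exp_pos])
    filter_upwards [hlt] with y hy
    exact treeFun_mul_exp_neg_of_abs_mul_exp_abs_lt hy
  exact hanalytic.eqOn_of_preconnected_of_eventuallyEq (fun _ _ => analyticAt_id)
    isPreconnected_Ico (by simp) hnear ⟨hx0, hx1⟩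

theorem antitone_one_sub_mul_exp_add_sq_div_two :
    Antitone fun y : ℝ => (1 - y) * exp y + y ^ 2 / 2 := by
  have hderiv (y : ℝ) :
      HasDerivAt (fun y : ℝ => (1 - y) * exp y + y ^ 2 / 2) (y * (1 - exp y)) y := by
    convert! (((hasDerivAt_id' y).const_sub 1).mul (hasDerivAt_exp y)).add
      ((hasDerivAt_pow 2 y).div_const 2) using 1
    ring
  refine antitone_of_hasDerivAt_nonpos hderiv fun y => ?_
  rcases le_total 0 y with hy | hy
  · exact mul_nonpos_of_nonneg_of_nonpos hy (by simpa using hy)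
  · exact mul_nonpos_of_nonpos_of_nonneg hy (by simpa using hy)

theorem one_sub_mul_exp_le {y : ℝ} (hy : 0 ≤ y) : (1 - y) * exp y ≤ 1 - y ^ 2 / 2 := by
  have h : (1 - y) * exp y + y ^ 2 / 2 ≤ 1 := by
    simpa using antitone_one_sub_mul_exp_add_sq_div_two hy
  linarith

theorem le_one_sub_mul_exp {y : ℝ} (hy0 : 0 ≤ y) (hy1 : y ≤ 1) :
    1 - y ^ 2 / 2 - y ^ 3 / 2 ≤ (1 - y) * exp y :=
  calc 1 - y ^ 2 / 2 - y ^ 3 / 2 = (1 - y) * (1 + y + y ^ 2 / 2) := by ring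
    _ ≤ (1 - y) * exp y :=
        mul_le_mul_of_nonneg_left (quadratic_le_exp_of_nonneg hy0) (sub_nonneg.2 hy1)

theorem sqrt_sub_mem_Icc_of_one_sub_mul_exp_eq {y δ : ℝ} (hy0 : 0 < y) (hy1 : y ≤ 1)
    (h : (1 - y) * exp y = 1 - δ) : √(2 * δ) - y ∈ Set.Icc 0 δ := by
  have hlower : y ^ 2 ≤ 2 * δ := by linarith [one_sub_mul_exp_le hy0.le]
  have hupper : 2 * δ ≤ y ^ 2 + y ^ 3 := by linarith [le_one_sub_mul_exp hy0.le hy1]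
  have hy_le : y ≤ √(2 * δ) := le_sqrt_of_sq_le hlower
  have hsq : √(2 * δ) ^ 2 = 2 * δ := sq_sqrt ((sq_nonneg y).trans hlower)
  have hgap : 2 * y * (√(2 * δ) - y) ≤ 2 * y * (y ^ 2 / 2) :=
    calc 2 * y * (√(2 * δ) - y) ≤ (√(2 * δ) + y) * (√(2 * δ) - y) := by
          gcongr; linarith
      _ = 2 * δ - y ^ 2 := by linear_combination hsq
      _ ≤ 2 * y * (y ^ 2 / 2) := by linarith
  have := le_of_mul_le_mul_left hgap (by positivity)
  exact ⟨by linarith, by linarith⟩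

theorem exists_one_sub_mul_exp_eq {δ : ℝ} (hδ0 : 0 < δ) (hδ1 : δ ≤ 1) :
    ∃ y ∈ Set.Ioc (0 : ℝ) 1, (1 - y) * exp y = 1 - δ := by
  have hcont : ContinuousOn (fun y : ℝ => (1 - y) * exp y) (Set.Icc 0 1) := by fun_prop
  exact intermediate_value_Ioc' zero_le_one hcont ⟨by simpa using hδ1, by simpa using hδ0⟩

theorem treeFun_sub_one_add_sqrt_mem_Icc {δ : ℝ} (hδ0 : 0 < δ) (hδ1 : δ ≤ 1) :
    treeFun ((1 - δ) / exp 1) - 1 + √(2 * δ) ∈ Set.Icc 0 δ := by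
  obtain ⟨y, ⟨hy0, hy1⟩, hy⟩ := exists_one_sub_mul_exp_eq hδ0 hδ1
  have hT : treeFun ((1 - δ) / exp 1) = 1 - y := by
    have harg : (1 - δ) / exp 1 = (1 - y) * exp (-(1 - y)) := by
      rw [← hy, mul_div_assoc, ← exp_sub, neg_sub]
    rw [harg, treeFun_mul_exp_neg (sub_nonneg.2 hy1) (sub_lt_self 1 hy0)]
  convert! sqrt_sub_mem_Icc_of_one_sub_mul_exp_eq hy0 hy1 hy using 1
  rw [hT]
  ring

/-- As `δ → 0⁺`, `T((1-δ)/e) = 1 - √(2δ) + O(δ)`. -/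
theorem treeFun_near_critical :
    ∃ C δ₀ : ℝ, 0 < C ∧ 0 < δ₀ ∧ ∀ δ : ℝ, 0 < δ → δ < δ₀ →
      |treeFun ((1 - δ) / Real.exp 1) - 1 + Real.sqrt (2 * δ)| ≤ C * δ := by
  refine ⟨1, 1, one_pos, one_pos, fun δ hδ0 hδ1 => ?_⟩
  obtain ⟨hlower, hupper⟩ := treeFun_sub_one_add_sqrt_mem_Icc hδ0 hδ1.le
  rwa [abs_of_nonneg hlower, one_mul]
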